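/- arXiv:1611.05950 — 3 statements merged into one kernel-verified Lean document; each statement's English description precedes it below -/
import Mathlib

section
/- Let X be a nonempty finite set, c* : X → {0,1} a target classification, and f : X → ℝ^d a feature map. Then either the 1NN classifier trained on the fully labeled featurized set {(f(x), c*(x)) : x ∈ X}, composed with f, equals c* on all of X, or there exist x₁, x₂ ∈ X with f(x₁) = f(x₂) and c*(x₁) ≠ c*(x₂) (an invalidation set of size two). (If a feature set is not sufficient for the 1NN learner, its invalidation cost is two.) -/
/-!
Every object `x` belongs to the training set, so the minimal distance from `f x` to a
training point is `0`, and the nearest training points are the `f y` with `f y = f x`.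
If no two objects share a feature vector but differ in label, then all labels entering
the minimum at `f x` equal `c x`, hence so does the value of the classifier.
-/

open scoped Classical

/-- The 1NN classifier trained on a finite labeled set `T ⊆ ℝ^d × {0,1}`:
it assigns to `z` the minimum of the labels of the pairs in `T` whose point is
at minimal Euclidean distance from `z` (with labels ordered `false < true`). -/
noncomputable def oneNN {d : ℕ} (T : Finset (EuclideanSpace ℝ (Fin d) × Bool))
    (z : EuclideanSpace ℝ (Fin d)) : Bool :=
  if ∀ py ∈ T, (∀ qy ∈ T, dist z py.1 ≤ dist z qy.1) → py.2 = true then true else false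

/-- If a feature set is not sufficient for the 1NN learner, its invalidation cost is
two: either training on all of `X` teaches `c`, or there are two objects with equal
feature vectors and different labels. -/
theorem stmt5 {X : Type*} [Fintype X] [Nonempty X] {d : ℕ} (c : X → Bool)
    (f : X → EuclideanSpace ℝ (Fin d)) :
    (∀ x : X, oneNN ((Finset.univ : Finset X).image fun x' => (f x', c x')) (f x) = c x) ∨
    (∃ x₁ x₂ : X, f x₁ = f x₂ ∧ c x₁ ≠ c x₂) := by
  by_cases h : ∃ x₁ x₂ : X, f x₁ = f x₂ ∧ c x₁ ≠ c x₂
  · exact Or.inr h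
  · left
    push Not at h
    intro x
    -- The pair `(f x, c x)` is at distance zero from `f x`, so the minimizing pairs are
    -- those `(f y, c y)` with `f y = f x`, and these all carry the label `c x`.
    have key : (∀ py ∈ (Finset.univ : Finset X).image (fun x' => (f x', c x')),
        (∀ qy ∈ (Finset.univ : Finset X).image (fun x' => (f x', c x')),
          dist (f x) py.1 ≤ dist (f x) qy.1) → py.2 = true) ↔ c x = true := by
      constructor
      · intro H
        refine H (f x, c x) (Finset.mem_image_of_mem _ (Finset.mem_univ x)) fun qy _ => ?_
        simp
      · intro hx py hpy hmin
        obtain ⟨y, -, rfl⟩ := Finset.mem_image.1 hpy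
        have h0 := hmin (f x, c x) (Finset.mem_image_of_mem _ (Finset.mem_univ x))
        rw [dist_self] at h0
        exact (h x y (dist_le_zero.1 h0)).symm.trans hx
    unfold oneNN
    cases hc : c x <;> simp only [key, hc] <;> simp
end

section
/- Let T be a finite labeled set in ℝ^d that is not linearly separable. Then there exists a subset T' ⊆ T with |T'| ≤ d + 2 that is not linearly separable. (The invalidation cost of a non-sufficient d-dimensional feature set for a consistent linear learner is at most d + 2.) -/
/-!
Each labeled point `(p, y)` determines the set of parameters `(w, b) ∈ ℝ^d × ℝ` that classify it
correctly. This set is an open half-space, hence convex, and a labeled set is separable exactly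
when the half-spaces of its points have a common element. The parameter space has dimension
`d + 1`, so Helly's theorem (`Convex.helly_theorem'`) says that if all subfamilies of at most
`d + 2` half-spaces intersect, then so does the whole family; the claim is the contrapositive.
-/

/-- Dot product of two vectors in `ℝ^d`. -/
def dot {d : ℕ} (w p : Fin d → ℝ) : ℝ := ∑ i, w i * p i

/-- A finite labeled set in `ℝ^d` is linearly separable if some affine hyperplane
`(w, b)` puts the points labeled `true` strictly on the positive side and the points
labeled `false` strictly on the negative side. -/
def LinSep {d : ℕ} (T : Finset ((Fin d → ℝ) × Bool)) : Prop :=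
  ∃ (w : Fin d → ℝ) (b : ℝ), ∀ py ∈ T,
    (py.2 = true → dot w py.1 + b > 0) ∧ (py.2 = false → dot w py.1 + b < 0)

/-- The parameters `(w, b)` of the affine functionals that classify the labeled point `py`
correctly. -/
def correctParams {d : ℕ} (py : (Fin d → ℝ) × Bool) : Set ((Fin d → ℝ) × ℝ) :=
  {x | (py.2 = true → dot x.1 py.1 + x.2 > 0) ∧ (py.2 = false → dot x.1 py.1 + x.2 < 0)}

lemma convex_correctParams {d : ℕ} (py : (Fin d → ℝ) × Bool) :
    Convex ℝ (correctParams py) := by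
  have h_lin : IsLinearMap ℝ (fun x : (Fin d → ℝ) × ℝ => dot x.1 py.1 + x.2) := by
    constructor
    · intro x y
      simp only [dot, Prod.fst_add, Prod.snd_add, Pi.add_apply, add_mul, Finset.sum_add_distrib]
      ring
    · intro c x
      simp only [dot, Prod.smul_fst, Prod.smul_snd, Pi.smul_apply, smul_eq_mul, mul_add,
        Finset.mul_sum, mul_assoc]
  obtain ⟨p, y⟩ := py
  cases y
  · simpa [correctParams] using convex_halfSpace_lt h_lin 0
  · simpa [correctParams] using convex_halfSpace_gt h_lin 0

lemma linSep_iff_nonempty_iInter {d : ℕ} (T : Finset ((Fin d → ℝ) × Bool)) :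
    LinSep T ↔ (⋂ py ∈ T, correctParams py).Nonempty := by
  simp only [LinSep, Set.Nonempty, Set.mem_iInter, correctParams, Set.mem_ofPred_eq, Prod.exists]

/-- The invalidation cost of a non-sufficient `d`-dimensional feature set for a
consistent linear learner is at most `d + 2`: every non-separable finite labeled set
contains a non-separable labeled subset of at most `d + 2` points. -/
theorem stmt8 {d : ℕ} (T : Finset ((Fin d → ℝ) × Bool)) (h : ¬ LinSep T) :
    ∃ T' ⊆ T, T'.card ≤ d + 2 ∧ ¬ LinSep T' := by
  by_contra! h_sub
  refine h ((linSep_iff_nonempty_iInter T).2 ?_)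
  refine Convex.helly_theorem' (𝕜 := ℝ) (fun py _ => convex_correctParams py) ?_
  intro I hI h_card
  have h_dim : Module.finrank ℝ ((Fin d → ℝ) × ℝ) = d + 1 := by simp
  exact (linSep_iff_nonempty_iInter I).1 (h_sub I hI (by omega))
end

section
/- For every d ≥ 1 there exists a labeled set of exactly d + 2 points in ℝ^d that is not linearly separable but such that every proper subset of it is linearly separable. (The bound of d + 2 on the invalidation cost of a d-dimensional feature set for a consistent linear learner is tight.) -/
/-- The labeled points: `none` is the origin, `some none` the vertex `(-1, …, -1)` and
`some (some i)` the vertex `e_i`. -/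
def simplexPt (d : ℕ) : Option (Option (Fin d)) → (Fin d → ℝ) × Bool
  | none => (0, false)
  | some none => (fun _ => -1, true)
  | some (some i) => (Pi.single i 1, true)

lemma simplexPt_injective (d : ℕ) : Function.Injective (simplexPt d) := by
  have key : ∀ i : Fin d, (fun _ => (-1 : ℝ)) ≠ Pi.single i 1 := by
    intro i h
    have := congrFun h i
    norm_num at this
  rintro (_ | _ | i) (_ | _ | j) h <;> simp only [simplexPt, Prod.mk.injEq] at h
  · rfl
  · simp at h
  · simp at h
  · simp at h
  · rfl
  · exact absurd h.1 (key j)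
  · simp at h
  · exact absurd h.1.symm (key i)
  · by_contra hne
    have hij : i ≠ j := by
      rintro rfl
      exact hne rfl
    have := congrFun h.1 i
    simp [hij] at this

lemma dot_single {d : ℕ} (w : Fin d → ℝ) (i : Fin d) : dot w (Pi.single i 1) = w i := by
  simp [dot, Pi.single_apply]

lemma dot_neg_one {d : ℕ} (w : Fin d → ℝ) : dot w (fun _ => -1) = -∑ i, w i := by
  simp [dot]

lemma dot_zero_right {d : ℕ} (w : Fin d → ℝ) : dot w 0 = 0 := by
  simp [dot]

lemma not_linSep_simplex (d : ℕ) : ¬ LinSep (Finset.univ.image (simplexPt d)) := by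
  rintro ⟨w, b, h⟩
  have hmem : ∀ x, simplexPt d x ∈ Finset.univ.image (simplexPt d) := fun x =>
    Finset.mem_image_of_mem _ (Finset.mem_univ x)
  have h0 := (h _ (hmem none)).2 rfl
  have h1 := (h _ (hmem (some none))).1 rfl
  have h2 : ∀ i, dot w (Pi.single i 1) + b > 0 := fun i => (h _ (hmem (some (some i)))).1 rfl
  simp only [simplexPt, dot_zero_right, dot_neg_one, dot_single] at h0 h1 h2
  have h3 : 0 ≤ ∑ i, w i := Finset.sum_nonneg fun i _ => by linarith [h2 i]
  linarith

/-- Omitting any single point of the configuration makes it separable. -/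
lemma exists_sep_of_ne (d : ℕ) (x : Option (Option (Fin d))) :
    ∃ (w : Fin d → ℝ) (b : ℝ), ∀ y, y ≠ x →
      ((simplexPt d y).2 = true → dot w (simplexPt d y).1 + b > 0) ∧
        ((simplexPt d y).2 = false → dot w (simplexPt d y).1 + b < 0) := by
  rcases x with _ | _ | j
  · refine ⟨0, 1, ?_⟩
    rintro (_ | _ | i) hy <;> simp_all [simplexPt, dot]
  · refine ⟨fun _ => 1, -(1 / 2), ?_⟩
    rintro (_ | _ | i) hy
    · simp [simplexPt, dot_zero_right]
    · exact absurd rfl hy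
    · simp only [simplexPt, dot_single]
      norm_num
  · -- The coefficient of `e_j` is chosen so that the form takes the value `1` at `(-1, …, -1)`.
    refine ⟨fun i => 1 - if i = j then (d + 1 : ℝ) else 0, -(1 / 2), ?_⟩
    rintro (_ | _ | i) hy
    · simp [simplexPt, dot_zero_right]
    · simp only [simplexPt, dot_neg_one, Finset.sum_sub_distrib]
      simp
      norm_num
    · have hij : i ≠ j := by
        rintro rfl
        exact hy rfl
      simp only [simplexPt, dot_single, if_neg hij]
      norm_num

/-- The bound `d + 2` on the invalidation cost for a consistent linear learner is
tight: for every `d ≥ 1` there is a labeled set of exactly `d + 2` points in `ℝ^d`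
that is not linearly separable, yet all of its proper subsets are linearly separable. -/
theorem stmt11 {d : ℕ} (hd : 1 ≤ d) :
    ∃ T : Finset ((Fin d → ℝ) × Bool), T.card = d + 2 ∧ ¬ LinSep T ∧
      ∀ T' ⊂ T, LinSep T' := by
  refine ⟨Finset.univ.image (simplexPt d), ?_, not_linSep_simplex d, ?_⟩
  · rw [Finset.card_image_of_injective _ (simplexPt_injective d)]
    simp
  · intro T' hT'
    have hsub := hT'.subset
    obtain ⟨p, hp, hpT'⟩ := Finset.exists_of_ssubset hT'
    obtain ⟨x, -, rfl⟩ := Finset.mem_image.mp hp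
    obtain ⟨w, b, h⟩ := exists_sep_of_ne d x
    refine ⟨w, b, fun q hq => ?_⟩
    obtain ⟨y, -, rfl⟩ := Finset.mem_image.mp (hsub hq)
    refine h y ?_
    rintro rfl
    exact hpT' hq
end
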